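/- Let Ω ⊆ ℂ^{n+m} be a pseudoconvex domain with coordinates (z,w), p(z,w) = w, D = p(Ω), Ω_w = p^{-1}(w) ∩ Ω, and ψ plurisubharmonic on Ω. Let ξ(·) : D → ℓ₁^{(n)} be holomorphic with the locally uniformly bounded property. Then the function (z,w) ↦ K^{ψ_w}_{ξ(w),Ω_w}(z) is upper-semicontinuous on Ω, where ψ_w = ψ|_{Ω_w}. -/

import Mathlib

open MeasureTheory Filter Topology Complex
open scoped ENNReal
noncomputable section

/-- The total degree `|α|` of a multi-index. -/
def mdeg {n : ℕ} (α : Fin n → ℕ) : ℕ := ∑ i, α i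

/-- The factorial `α!` of a multi-index. -/
def mfact {n : ℕ} (α : Fin n → ℕ) : ℕ := ∏ i, Nat.factorial (α i)

/-- Partial derivative in the `i`-th coordinate direction. -/
def pderivC {n : ℕ} (i : Fin n) (f : (Fin n → ℂ) → ℂ) : (Fin n → ℂ) → ℂ :=
  fun z => deriv (fun t : ℂ => f (Function.update z i t)) (z i)

/-- Iterated partial derivative `∂^{|α|} f / ∂z^α`. -/
def multiDeriv {n : ℕ} (α : Fin n → ℕ) (f : (Fin n → ℂ) → ℂ) : (Fin n → ℂ) → ℂ :=
  (List.finRange n).foldr (fun i g => (pderivC i)^[α i] g) f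

/-- Membership in `ℓ₁^{(n)}`: `∑_α |ξ_α| ρ^{|α|} < ∞` for every `ρ > 0`. -/
def MemL1 {n : ℕ} (ξ : (Fin n → ℕ) → ℂ) : Prop :=
  ∀ ρ : ℝ, 0 < ρ → Summable fun α : Fin n → ℕ => ‖ξ α‖ * ρ ^ mdeg α

/-- The action `(ξ·f)(z) = ∑_α ξ_α f^{(α)}(z)/α!`. -/
def xiAct {n : ℕ} (ξ : (Fin n → ℕ) → ℂ) (f : (Fin n → ℂ) → ℂ) (z : Fin n → ℂ) : ℂ :=
  ∑' α : Fin n → ℕ, ξ α * multiDeriv α f z / (mfact α : ℂ)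

/-- Plurisubharmonicity of an `EReal`-valued function on a set: upper semicontinuity
together with the sub-mean value inequality on every complex circle whose closed disc
is contained in the set (expressed via integrable real-valued majorants). -/
def PlurisubharmonicOn {E : Type*} [NormedAddCommGroup E] [NormedSpace ℂ E]
    (f : E → EReal) (s : Set E) : Prop :=
  UpperSemicontinuousOn f s ∧
  ∀ z ∈ s, ∀ v : E, (∀ t : ℂ, ‖t‖ ≤ 1 → z + t • v ∈ s) →
    ∀ g : ℝ → ℝ, IntervalIntegrable g volume 0 (2 * Real.pi) →
      (∀ θ : ℝ, f (z + Complex.exp (θ * Complex.I) • v) ≤ (g θ : EReal)) →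
      f z ≤ (((2 * Real.pi)⁻¹ * ∫ θ in (0:ℝ)..(2 * Real.pi), g θ : ℝ) : EReal)

/-- The weighted `L²` integral `∫_D |f|² e^{-ψ}`. -/
def wL2 {n : ℕ} (D : Set (Fin n → ℂ)) (ψ : (Fin n → ℂ) → ℝ) (f : (Fin n → ℂ) → ℂ) : ℝ≥0∞ :=
  ∫⁻ z in D, ENNReal.ofReal (‖f z‖ ^ 2 * Real.exp (-ψ z))

/-- Membership in the weighted Bergman space `A²(D, e^{-ψ})`. -/
def MemA2 {n : ℕ} (D : Set (Fin n → ℂ)) (ψ : (Fin n → ℂ) → ℝ) (f : (Fin n → ℂ) → ℂ) : Prop :=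
  DifferentiableOn ℂ f D ∧ wL2 D ψ f < ⊤

/-- The weighted `ξ`-Bergman kernel `K^ψ_{ξ,D}(z)`. -/
def xiBergman {n : ℕ} (ξ : (Fin n → ℕ) → ℂ) (D : Set (Fin n → ℂ))
    (ψ : (Fin n → ℂ) → ℝ) (z : Fin n → ℂ) : ℝ≥0∞ :=
  ⨆ f : {f // MemA2 D ψ f}, ENNReal.ofReal (‖xiAct ξ f.1 z‖ ^ 2) / wL2 D ψ f.1

/-- The locally uniformly bounded property for a functional-valued function on `D`. -/
def LocUnifBdd {n m : ℕ} (ξ : (Fin m → ℂ) → (Fin n → ℕ) → ℂ) (D : Set (Fin m → ℂ)) : Prop :=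
  ∀ w ∈ D, ∀ ρ : ℝ, 0 < ρ → ∃ V ∈ 𝓝 w, ∃ C : ℝ,
    ∀ w' ∈ V ∩ D, (∑' α : Fin n → ℕ, ENNReal.ofReal (‖ξ w' α‖ * ρ ^ mdeg α)) ≤ ENNReal.ofReal C

/-- Pseudoconvexity of an open set: existence of a continuous plurisubharmonic
exhaustion function. -/
def Pseudoconvex {E : Type*} [NormedAddCommGroup E] [NormedSpace ℂ E] (Ω : Set E) : Prop :=
  IsOpen Ω ∧ ∃ u : E → ℝ, ContinuousOn u Ω ∧
    PlurisubharmonicOn (fun x => (u x : EReal)) Ω ∧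
    ∀ c : ℝ, ∃ K : Set E, IsCompact K ∧ K ⊆ Ω ∧ {x ∈ Ω | u x ≤ c} ⊆ K

/-- The fiberwise `ξ(w)`-Bergman kernel `K^{ψ_w}_{ξ(w),Ω_w}(z)` of the fibration
`p(z,w) = w` of `Ω`. -/
def fiberKernel {n m : ℕ} (ξ : (Fin m → ℂ) → (Fin n → ℕ) → ℂ)
    (Ω : Set ((Fin n → ℂ) × (Fin m → ℂ))) (ψ : (Fin n → ℂ) × (Fin m → ℂ) → ℝ)
    (p : (Fin n → ℂ) × (Fin m → ℂ)) : ℝ≥0∞ :=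
  xiBergman (ξ p.2) {z | (z, p.2) ∈ Ω} (fun z => ψ (z, p.2)) p.1

/-!
Fix `(z₀, w₀) ∈ Ω` and `c` below the upper limit of the kernels at `(z₀, w₀)`. Along some sequence
`(z_j, w_j) → (z₀, w₀)` there are functions `f_j` in the unit balls of the Bergman spaces of the
fibres `Ω_{w_j}` with `|(ξ(w_j)·f_j)(z_j)|² > c`. Since `ψ` is locally bounded above, the sub-mean
value inequality for `|f_j|²` bounds the `f_j` locally uniformly near the fibre `Ω_{w₀}`, so by
Montel's theorem a subsequence converges locally uniformly there to a holomorphic `F`. Upper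
semicontinuity of `ψ` and Fatou's lemma put `F` in the unit ball over `w₀`. Cauchy's estimates
and the locally uniform bounds on `ξ` dominate the series defining the action, whence
`(ξ(w_j)·f_j)(z_j) → (ξ(w₀)·F)(z₀)` and `c ≤ |(ξ(w₀)·F)(z₀)|²`.

The fibres `Ω_{w_j}` vary with `j`, so locally uniform convergence of holomorphic functions is
understood to allow domains that vary: each point of the limit domain need only have a
neighbourhood on which almost all of the functions are holomorphic.
-/

/-! ### Schwarz estimates in normed spaces -/

lemma mapsTo_closedBall_two_mul_of_norm_le {E F : Type*} [PseudoMetricSpace E]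
    [SeminormedAddCommGroup F] {f : E → F} {c : E} {R M : ℝ} (hR : 0 < R)
    (hM : ∀ y ∈ Metric.ball c R, ‖f y‖ ≤ M) :
    Set.MapsTo f (Metric.ball c R) (Metric.closedBall (f c) (2 * M)) := fun y hy => by
  rw [mem_closedBall_iff_norm]
  linarith [norm_sub_le (f y) (f c), hM y hy, hM c (Metric.mem_ball_self hR)]

section SchwarzEstimates

variable {E F : Type*} [NormedAddCommGroup E] [NormedSpace ℂ E] [NormedAddCommGroup F]
  [NormedSpace ℂ F] {f : E → F} {c z : E} {R M : ℝ}

lemma norm_sub_le_of_forall_ball_norm_le (hd : DifferentiableOn ℂ f (Metric.ball c R))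
    (hM : ∀ y ∈ Metric.ball c R, ‖f y‖ ≤ M) (hz : z ∈ Metric.ball c R) :
    ‖f z - f c‖ ≤ 2 * M / R * ‖z - c‖ := by
  have hR : 0 < R := Metric.nonempty_ball.mp ⟨z, hz⟩
  simpa only [dist_eq_norm] using
    dist_le_div_mul_dist_of_mapsTo_ball hd (mapsTo_closedBall_two_mul_of_norm_le hR hM) hz

lemma norm_fderiv_le_of_forall_ball_norm_le (hR : 0 < R)
    (hd : DifferentiableOn ℂ f (Metric.ball c R)) (hM : ∀ y ∈ Metric.ball c R, ‖f y‖ ≤ M) :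
    ‖fderiv ℂ f c‖ ≤ 2 * M / R :=
  norm_fderiv_le_div_of_mapsTo_ball hd (mapsTo_closedBall_two_mul_of_norm_le hR hM) hR

lemma norm_sub_sub_fderiv_le_of_forall_ball_norm_le
    (hd : DifferentiableOn ℂ f (Metric.ball c R)) (hM : ∀ y ∈ Metric.ball c R, ‖f y‖ ≤ M)
    (hz : z ∈ Metric.ball c R) :
    ‖f z - f c - fderiv ℂ f c (z - c)‖ ≤ 4 * M * (‖z - c‖ / R) ^ 2 := by
  have hR : 0 < R := Metric.nonempty_ball.mp ⟨z, hz⟩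
  have hda : HasFDerivAt f (fderiv ℂ f c) c :=
    (hd.differentiableAt (Metric.ball_mem_nhds c hR)).hasFDerivAt
  let g : E → F := fun y => f y - fderiv ℂ f c (y - c)
  have hgd : DifferentiableOn ℂ g (Metric.ball c R) :=
    hd.sub ((fderiv ℂ f c).differentiable.comp (differentiable_id.sub_const c)).differentiableOn
  have hgsub : ∀ y, g y - g c = f y - f c - fderiv ℂ f c (y - c) := fun y => by
    simp only [g, sub_self, map_zero, sub_zero, sub_right_comm]
  have hmaps : Set.MapsTo g (Metric.ball c R) (Metric.closedBall (g c) (4 * M)) := fun y hy => by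
    rw [mem_closedBall_iff_norm, hgsub]
    have hlin : ‖fderiv ℂ f c (y - c)‖ ≤ 2 * M := by
      calc ‖fderiv ℂ f c (y - c)‖ ≤ 2 * M / R * R :=
            (fderiv ℂ f c).le_of_opNorm_le_of_le (norm_fderiv_le_of_forall_ball_norm_le hR hd hM)
              (mem_ball_iff_norm.mp hy).le
        _ = 2 * M := by field_simp
    have hsub := mem_closedBall_iff_norm.mp (mapsTo_closedBall_two_mul_of_norm_le hR hM hy)
    linarith [norm_sub_le (f y - f c) (fderiv ℂ f c (y - c))]
  have ho : (g · - g c) =o[𝓝 c] fun y => ‖y - c‖ ^ 1 := by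
    simpa only [hgsub, pow_one] using hda.isLittleO.norm_right
  simpa only [dist_eq_norm, hgsub] using
    dist_le_mul_div_pow_of_mapsTo_ball_of_isLittleO hgd hmaps ho hz

end SchwarzEstimates

/-! ### Locally uniform limits of holomorphic functions -/

lemma eventually_prod_nhds_iff_exists_ball {ι X : Type*} [PseudoMetricSpace X] {l : Filter ι}
    {x : X} {p : ι × X → Prop} :
    (∀ᶠ q in l ×ˢ 𝓝 x, p q) ↔ ∃ r > 0, ∀ᶠ i in l, ∀ y ∈ Metric.ball x r, p (i, y) := by
  rw [Metric.eventually_prod_nhds_iff]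
  constructor
  · rintro ⟨q, hq, r, hr, h⟩
    exact ⟨r, hr, hq.mono fun i hi y hy => h hi hy⟩
  · rintro ⟨r, hr, h⟩
    exact ⟨_, h, r, hr, fun _ hi y hy => hi y hy⟩

open scoped Uniformity NNReal

section UniformCauchy

variable {ι X Y : Type*} [TopologicalSpace X] [UniformSpace Y] {f : ι → X → Y} {l : Filter ι}
  {U : Set X}

lemma exists_tendstoLocallyUniformlyOn_of_uniformCauchySeqOnFilter [CompleteSpace Y] [l.NeBot]
    (hU : IsOpen U) (hf : ∀ x ∈ U, UniformCauchySeqOnFilter f l (𝓝 x)) :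
    ∃ g, TendstoLocallyUniformlyOn f g l U := by
  have hlim : ∀ x, ∃ y, x ∈ U → Tendsto (fun i => f i x) l (𝓝 y) := fun x => by
    by_cases hx : x ∈ U
    · have hx' := (hf x hx).mono_right (pure_le_nhds x)
      rw [← principal_singleton, ← uniformCauchySeqOn_iff_uniformCauchySeqOnFilter] at hx'
      obtain ⟨y, hy⟩ := CompleteSpace.complete (hx'.cauchy_map rfl)
      exact ⟨y, fun _ => hy⟩
    · exact ⟨f l.nonempty_of_neBot.some x, fun h => (hx h).elim⟩
  choose g hg using hlim
  refine ⟨g, hU.tendstoLocallyUniformlyOn_iff_forall_tendsto.mpr fun x hx => ?_⟩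
  rw [← tendstoUniformlyOnFilter_iff_tendsto]
  exact (hf x hx).tendstoUniformlyOnFilter_of_tendsto ((hU.eventually_mem hx).mono hg)

lemma uniformCauchySeqOnFilter_nhds_of_dense {s : Set X} {x : X}
    (hequi : Tendsto (fun q : ι × X => (f q.1 x, f q.1 q.2)) (l ×ˢ 𝓝 x) (𝓤 Y))
    (hx : x ∈ closure s) (hs : ∀ d ∈ s, ∃ y, Tendsto (fun i => f i d) l (𝓝 y)) :
    UniformCauchySeqOnFilter f l (𝓝 x) := by
  have hcauchy : Tendsto (fun p : ι × ι => (f p.1 x, f p.2 x)) (l ×ˢ l) (𝓤 Y) := by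
    intro V hV
    obtain ⟨W, hW, hWsymm, hWV⟩ := comp_comp_symm_mem_uniformity_sets hV
    obtain ⟨q, hq, r, hr, hqr⟩ := eventually_prod_iff.mp (hequi hW)
    obtain ⟨d, hrd, hds⟩ := (hr.and_frequently (mem_closure_iff_frequently.mp hx)).exists
    obtain ⟨y, hy⟩ := hs d hds
    have hd : Tendsto (fun p : ι × ι => (f p.1 d, f p.2 d)) (l ×ˢ l) (𝓤 Y) :=
      ((hy.comp tendsto_fst).prodMk_nhds (hy.comp tendsto_snd)).mono_right (nhds_le_uniformity y)
    rw [mem_map]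
    filter_upwards [hd hW, hq.prod_mk hq] with p hpd hpq
    exact hWV (SetRel.prodMk_mem_comp (SetRel.prodMk_mem_comp (hqr hpq.1 hrd) hpd)
      (hWsymm.symm _ _ (hqr hpq.2 hrd)))
  have hleft : Tendsto (fun m : (ι × ι) × X => (m.1.1, m.2)) ((l ×ˢ l) ×ˢ 𝓝 x) (l ×ˢ 𝓝 x) :=
    (tendsto_fst.comp tendsto_fst).prodMk tendsto_snd
  have hright : Tendsto (fun m : (ι × ι) × X => (m.1.2, m.2)) ((l ×ˢ l) ×ˢ 𝓝 x) (l ×ˢ 𝓝 x) :=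
    (tendsto_snd.comp tendsto_fst).prodMk tendsto_snd
  exact ((hequi.comp hleft).uniformity_symm.uniformity_trans
    (hcauchy.comp tendsto_fst)).uniformity_trans (hequi.comp hright)

end UniformCauchy

lemma exists_ball_subset_norm_le {X F : Type*} [PseudoMetricSpace X] [SeminormedAddCommGroup F]
    {g : X → F} {U : Set X} {x : X} (hU : IsOpen U) (hx : x ∈ U) (hg : ContinuousOn g U) :
    ∃ r > 0, Metric.ball x r ⊆ U ∧ ∃ M, ∀ y ∈ Metric.ball x r, ‖g y‖ ≤ M := by
  have hlt : ∀ᶠ y in 𝓝 x, ‖g y‖ < ‖g x‖ + 1 :=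
    (hg.continuousAt (hU.mem_nhds hx)).norm.eventually_lt_const (lt_add_one _)
  obtain ⟨r, hr, h⟩ := Metric.eventually_nhds_iff_ball.mp ((hU.eventually_mem hx).and hlt)
  exact ⟨r, hr, fun y hy => (h y hy).1, _, fun y hy => (h y hy).2.le⟩

section HolomorphicLimits

variable {ι E F : Type*} [NormedAddCommGroup E] [NormedSpace ℂ E] [NormedAddCommGroup F]
  [NormedSpace ℂ F] {f : ι → E → F} {g : E → F} {l : Filter ι} {U : Set E} {x : E}

/-- Eventual holomorphy of a family `f i` near each point of `U`: the domains of holomorphy may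
vary with `i`, as long as each point of `U` has a neighbourhood contained in almost all of them. -/
def EventuallyHolomorphicOn (f : ι → E → F) (l : Filter ι) (U : Set E) : Prop :=
  ∀ x ∈ U, ∀ᶠ p in l ×ˢ 𝓝 x, DifferentiableAt ℂ (f p.1) p.2

/-- Local boundedness, uniform along `l`, of a family `f i` near each point of `U`. -/
def EventuallyLocallyBoundedOn {X Y : Type*} [TopologicalSpace X] [Norm Y] (f : ι → X → Y)
    (l : Filter ι) (U : Set X) : Prop :=
  ∀ x ∈ U, ∃ M, ∀ᶠ p in l ×ˢ 𝓝 x, ‖f p.1 p.2‖ ≤ M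

/-- Convergence of holomorphic functions: `f i → g` locally uniformly on `U` along `l`, with each
`f i` holomorphic only on a domain that is allowed to depend on `i`. -/
structure TendstoHolomorphicallyOn (f : ι → E → F) (g : E → F) (l : Filter ι) (U : Set E) :
    Prop where
  eventuallyHolomorphicOn : EventuallyHolomorphicOn f l U
  tendstoLocallyUniformlyOn : TendstoLocallyUniformlyOn f g l U

lemma EventuallyHolomorphicOn.exists_ball (hf : EventuallyHolomorphicOn f l U) (hx : x ∈ U) :
    ∃ r > 0, ∀ᶠ i in l, DifferentiableOn ℂ (f i) (Metric.ball x r) := by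
  obtain ⟨r, hr, h⟩ := eventually_prod_nhds_iff_exists_ball.mp (hf x hx)
  exact ⟨r, hr, h.mono fun i hi y hy => (hi y hy).differentiableWithinAt⟩

lemma EventuallyHolomorphicOn.exists_ball_norm_le (hf : EventuallyHolomorphicOn f l U)
    (hb : EventuallyLocallyBoundedOn f l U) (hx : x ∈ U) :
    ∃ r > 0, ∃ M, ∀ᶠ i in l, DifferentiableOn ℂ (f i) (Metric.ball x r) ∧
      ∀ y ∈ Metric.ball x r, ‖f i y‖ ≤ M := by
  obtain ⟨M, hM⟩ := hb x hx
  obtain ⟨r, hr, h⟩ := eventually_prod_nhds_iff_exists_ball.mp ((hf x hx).and hM)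
  exact ⟨r, hr, M, h.mono fun i hi =>
    ⟨fun y hy => (hi y hy).1.differentiableWithinAt, fun y hy => (hi y hy).2⟩⟩

namespace TendstoHolomorphicallyOn

lemma tendsto_apply (h : TendstoHolomorphicallyOn f g l U) (hx : x ∈ U) :
    Tendsto (fun i => f i x) l (𝓝 (g x)) :=
  h.tendstoLocallyUniformlyOn.tendsto_at hx

lemma uniformCauchySeqOnFilter_fderiv [LocallyCompactSpace E] (hU : IsOpen U)
    (h : TendstoHolomorphicallyOn f g l U) (hx : x ∈ U) :
    UniformCauchySeqOnFilter (fun i => fderiv ℂ (f i)) l (𝓝 x) := by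
  obtain ⟨v, hv, hunif⟩ := ((tendstoLocallyUniformlyOn_TFAE f g l hU).out 0 2 rfl rfl).mp
    h.tendstoLocallyUniformlyOn x hx
  rw [hU.nhdsWithin_eq hx] at hv
  obtain ⟨r₁, hr₁, hholo⟩ := h.eventuallyHolomorphicOn.exists_ball hx
  obtain ⟨r, hr, hrv⟩ := Metric.mem_nhds_iff.mp (inter_mem hv (Metric.ball_mem_nhds x hr₁))
  intro V hV
  obtain ⟨ε, hε, hεV⟩ := Metric.mem_uniformity_dist.mp hV
  have hclose :=
    hunif.uniformCauchySeqOn _ (Metric.dist_mem_uniformity (ε := ε * r / 8) (by positivity))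
  rw [eventually_prod_nhds_iff_exists_ball]
  refine ⟨r / 2, half_pos hr, ?_⟩
  filter_upwards [hclose, hholo.prod_mk hholo] with p hpclose ⟨hp₁, hp₂⟩ y hy
  have hball : Metric.ball y (r / 2) ⊆ Metric.ball x r :=
    Metric.ball_subset_ball' (by linarith [Metric.mem_ball.mp hy])
  have hd₁ := hp₁.mono fun z hz => (hrv (hball hz)).2
  have hd₂ := hp₂.mono fun z hz => (hrv (hball hz)).2
  have hyn : Metric.ball y (r / 2) ∈ 𝓝 y := Metric.ball_mem_nhds y (half_pos hr)
  have hbound : ‖fderiv ℂ (f p.1 - f p.2) y‖ ≤ 2 * (ε * r / 8) / (r / 2) :=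
    norm_fderiv_le_of_forall_ball_norm_le (half_pos hr) (hd₁.sub hd₂) fun z hz => by
      rw [Pi.sub_apply, ← dist_eq_norm]
      exact (hpclose z (hrv (hball hz)).1).le
  rw [fderiv_sub (hd₁.differentiableAt hyn) (hd₂.differentiableAt hyn)] at hbound
  refine hεV ?_
  rw [dist_eq_norm]
  refine hbound.trans_lt ?_
  rw [show 2 * (ε * r / 8) / (r / 2) = ε / 2 by field_simp; norm_num]
  exact half_lt_self hε

lemma exists_tendsto_fderiv [LocallyCompactSpace E] [CompleteSpace F] [l.NeBot] (hU : IsOpen U)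
    (h : TendstoHolomorphicallyOn f g l U) :
    ∃ L : E → E →L[ℂ] F, TendstoLocallyUniformlyOn (fun i => fderiv ℂ (f i)) L l U ∧
      ∀ x ∈ U, HasFDerivAt g (L x) x := by
  obtain ⟨L, hL⟩ := exists_tendstoLocallyUniformlyOn_of_uniformCauchySeqOnFilter hU
    fun x hx => h.uniformCauchySeqOnFilter_fderiv hU hx
  refine ⟨L, hL, fun x hx => ?_⟩
  have hLx : TendstoUniformlyOnFilter (fun i => fderiv ℂ (f i)) L l (𝓝 x) :=
    tendstoUniformlyOnFilter_iff_tendsto.mpr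
      (hU.tendstoLocallyUniformlyOn_iff_forall_tendsto.mp hL x hx)
  exact hasFDerivAt_of_tendstoUniformlyOnFilter hLx
    ((h.eventuallyHolomorphicOn x hx).mono fun _ hp => hp.hasFDerivAt)
    ((hU.eventually_mem hx).mono fun _ hy => h.tendsto_apply hy)

lemma differentiableOn [LocallyCompactSpace E] [CompleteSpace F] [l.NeBot] (hU : IsOpen U)
    (h : TendstoHolomorphicallyOn f g l U) : DifferentiableOn ℂ g U := fun x hx => by
  obtain ⟨L, -, hL⟩ := h.exists_tendsto_fderiv hU
  exact (hL x hx).differentiableAt.differentiableWithinAt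

lemma eventuallyLocallyBoundedOn [LocallyCompactSpace E] [CompleteSpace F] [l.NeBot]
    (hU : IsOpen U) (h : TendstoHolomorphicallyOn f g l U) :
    EventuallyLocallyBoundedOn f l U := fun x hx => by
  have hclose : ∀ᶠ p in l ×ˢ 𝓝 x, dist (g p.2) (f p.1 p.2) < 1 :=
    (hU.tendstoLocallyUniformlyOn_iff_forall_tendsto.mp h.tendstoLocallyUniformlyOn x hx).eventually
      (Metric.dist_mem_uniformity one_pos)
  have hlimit : ∀ᶠ p in l ×ˢ 𝓝 x, ‖g p.2‖ < ‖g x‖ + 1 :=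
    tendsto_snd.eventually <| ((h.differentiableOn hU).continuousOn.continuousAt
      (hU.mem_nhds hx)).norm.eventually_lt_const (lt_add_one _)
  refine ⟨‖g x‖ + 1 + 1, (hclose.and hlimit).mono fun p hp => ?_⟩
  rw [dist_eq_norm'] at hp
  exact (norm_le_insert' _ _).trans (add_le_add hp.2.le hp.1.le)

lemma tendstoLocallyUniformlyOn_fderiv [LocallyCompactSpace E] [CompleteSpace F] [l.NeBot]
    (hU : IsOpen U) (h : TendstoHolomorphicallyOn f g l U) :
    TendstoLocallyUniformlyOn (fun i => fderiv ℂ (f i)) (fderiv ℂ g) l U := by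
  obtain ⟨L, hL, hgL⟩ := h.exists_tendsto_fderiv hU
  exact hL.congr_right fun x hx => (hgL x hx).fderiv.symm

end TendstoHolomorphicallyOn

lemma norm_inv_smul_sub_sub_fderiv_le {c v : E} {R M : ℝ} {t : ℂ} (ht : t ≠ 0)
    (hd : DifferentiableOn ℂ g (Metric.ball c R)) (hM : ∀ y ∈ Metric.ball c R, ‖g y‖ ≤ M)
    (htv : ‖t • v‖ < R) :
    ‖t⁻¹ • (g (c + t • v) - g c) - fderiv ℂ g c v‖ ≤ 4 * M * (‖v‖ / R) ^ 2 * ‖t‖ := by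
  have hquad := norm_sub_sub_fderiv_le_of_forall_ball_norm_le hd hM (z := c + t • v)
    (by simpa using htv)
  rw [add_sub_cancel_left, map_smul] at hquad
  have hfactor : t⁻¹ • (g (c + t • v) - g c) - fderiv ℂ g c v =
      t⁻¹ • (g (c + t • v) - g c - t • fderiv ℂ g c v) := by
    rw [smul_sub t⁻¹ (g (c + t • v) - g c), inv_smul_smul₀ ht]
  have : 0 < ‖t‖ := norm_pos_iff.mpr ht
  calc ‖t⁻¹ • (g (c + t • v) - g c) - fderiv ℂ g c v‖
      ≤ ‖t‖⁻¹ * (4 * M * (‖t • v‖ / R) ^ 2) := by rw [hfactor, norm_smul, norm_inv]; gcongr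
    _ = 4 * M * (‖v‖ / R) ^ 2 * ‖t‖ := by rw [norm_smul]; field_simp

lemma tendstoHolomorphicallyOn_inv_smul_sub (hU : IsOpen U) (hg : DifferentiableOn ℂ g U) (v : E) :
    TendstoHolomorphicallyOn (fun (t : ℂ) x => t⁻¹ • (g (x + t • v) - g x))
      (fun x => fderiv ℂ g x v) (𝓝[≠] 0) U where
  eventuallyHolomorphicOn x hx := by
    have hshift : Tendsto (fun p : ℂ × E => p.2 + p.1 • v) (𝓝[≠] 0 ×ˢ 𝓝 x) (𝓝 x) := by
      have hc : Continuous fun p : ℂ × E => p.2 + p.1 • v := by fun_prop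
      have := hc.tendsto (0, x)
      rw [nhds_prod_eq, zero_smul, add_zero] at this
      exact this.mono_left (prod_mono_left _ nhdsWithin_le_nhds)
    filter_upwards [hshift.eventually (hU.eventually_mem hx),
      tendsto_snd.eventually (hU.eventually_mem hx)] with p hp₁ hp₂
    have hd₁ : DifferentiableAt ℂ (fun y => g (y + p.1 • v)) p.2 :=
      (hg.differentiableAt (hU.mem_nhds hp₁)).comp p.2 (by fun_prop)
    exact (hd₁.sub (hg.differentiableAt (hU.mem_nhds hp₂))).const_smul _
  tendstoLocallyUniformlyOn := by
    rw [hU.tendstoLocallyUniformlyOn_iff_forall_tendsto]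
    intro x hx
    obtain ⟨r, hr, hrU, M, hM⟩ := exists_ball_subset_norm_le hU hx hg.continuousOn
    have hsmul : Tendsto (fun t : ℂ => ‖t • v‖) (𝓝 0) (𝓝 0) := by
      simpa only [norm_smul, zero_mul] using tendsto_norm_zero.mul_const ‖v‖
    refine tendsto_uniformity_iff_dist_tendsto_zero.mpr (squeeze_zero'
      (.of_forall fun _ => dist_nonneg)
      (g := fun p : ℂ × E => 4 * M * (‖v‖ / (r / 2)) ^ 2 * ‖p.1‖) ?_ ?_)
    · refine eventually_prod_nhds_iff_exists_ball.mpr ⟨r / 2, half_pos hr, ?_⟩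
      filter_upwards [self_mem_nhdsWithin,
        nhdsWithin_le_nhds (hsmul.eventually_lt_const (half_pos hr))] with t ht htv y hy
      have hball : Metric.ball y (r / 2) ⊆ Metric.ball x r :=
        Metric.ball_subset_ball' (by linarith [Metric.mem_ball.mp hy])
      rw [dist_comm, dist_eq_norm]
      exact norm_inv_smul_sub_sub_fderiv_le ht (hg.mono (hball.trans hrU))
        (fun z hz => hM z (hball hz)) htv
    · have hfst : Tendsto (fun p : ℂ × E => ‖p.1‖) (𝓝[≠] 0 ×ˢ 𝓝 x) (𝓝 0) :=
        (tendsto_norm_zero.mono_left nhdsWithin_le_nhds).comp tendsto_fst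
      simpa using hfst.const_mul (4 * M * (‖v‖ / (r / 2)) ^ 2)

lemma differentiableOn_fderiv_apply [LocallyCompactSpace E] [CompleteSpace F] (hU : IsOpen U)
    (hg : DifferentiableOn ℂ g U) (v : E) : DifferentiableOn ℂ (fun x => fderiv ℂ g x v) U :=
  (tendstoHolomorphicallyOn_inv_smul_sub hU hg v).differentiableOn hU

end HolomorphicLimits

/-! ### Montel's theorem -/

lemma exists_strictMono_forall_tendsto_of_eventually_mem_isBounded {κ X : Type*} [Countable κ]
    [PseudoMetricSpace X] [ProperSpace X] (s : ℕ → κ → X)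
    (hs : ∀ k, ∃ B, Bornology.IsBounded B ∧ ∀ᶠ j in atTop, s j k ∈ B) :
    ∃ φ : ℕ → ℕ, StrictMono φ ∧ ∀ k, ∃ y, Tendsto (fun j => s (φ j) k) atTop (𝓝 y) := by
  have hcompact : ∀ k, ∃ K, IsCompact K ∧ ∀ j, s j k ∈ K := fun k => by
    obtain ⟨B, hB, hsB⟩ := hs k
    obtain ⟨N, hN⟩ := eventually_atTop.mp hsB
    have hinitial : Bornology.IsBounded ((s · k) '' Set.Iio N) :=
      ((Set.finite_Iio N).image _).isBounded
    refine ⟨_, (hB.union hinitial).isCompact_closure, fun j => subset_closure ?_⟩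
    rcases lt_or_ge j N with hj | hj
    exacts [.inr ⟨j, hj, rfl⟩, .inl (hN j hj)]
  choose K hK hsK using hcompact
  obtain ⟨y, -, φ, hφ, hy⟩ := (isCompact_univ_pi hK).tendsto_subseq (x := s) fun j k _ => hsK k j
  exact ⟨φ, hφ, fun k => ⟨y k, tendsto_pi_nhds.mp hy k⟩⟩

section Montel

variable {ι E F : Type*} [NormedAddCommGroup E] [NormedSpace ℂ E] [NormedAddCommGroup F]
  [NormedSpace ℂ F] {U : Set E}

lemma EventuallyHolomorphicOn.comp_tendsto {κ : Type*} {f : ι → E → F} {l : Filter ι}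
    {l' : Filter κ} {φ : κ → ι} (hf : EventuallyHolomorphicOn f l U) (hφ : Tendsto φ l' l) :
    EventuallyHolomorphicOn (fun k => f (φ k)) l' U :=
  fun x hx => (hφ.prodMap tendsto_id).eventually (hf x hx)

lemma EventuallyHolomorphicOn.tendsto_uniformity {f : ι → E → F} {l : Filter ι} {x : E}
    (hf : EventuallyHolomorphicOn f l U) (hb : EventuallyLocallyBoundedOn f l U) (hx : x ∈ U) :
    Tendsto (fun q : ι × E => (f q.1 x, f q.1 q.2)) (l ×ˢ 𝓝 x) (𝓤 F) := by
  obtain ⟨r, hr, M, hM⟩ := hf.exists_ball_norm_le hb hx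
  refine tendsto_uniformity_iff_dist_tendsto_zero.mpr (squeeze_zero'
    (.of_forall fun _ => dist_nonneg) (g := fun q : ι × E => 2 * M / r * ‖q.2 - x‖) ?_ ?_)
  · refine eventually_prod_nhds_iff_exists_ball.mpr ⟨r, hr, hM.mono fun i hi y hy => ?_⟩
    rw [dist_comm, dist_eq_norm]
    exact norm_sub_le_of_forall_ball_norm_le hi.1 hi.2 hy
  · simpa using ((tendsto_norm_sub_self x).comp tendsto_snd).const_mul (2 * M / r)

theorem EventuallyHolomorphicOn.exists_subseq_tendsto
    [TopologicalSpace.SeparableSpace E] [ProperSpace F]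
    {f : ℕ → E → F} (hU : IsOpen U) (hf : EventuallyHolomorphicOn f atTop U)
    (hb : EventuallyLocallyBoundedOn f atTop U) :
    ∃ φ : ℕ → ℕ, StrictMono φ ∧ ∃ g,
      TendstoHolomorphicallyOn (fun j => f (φ j)) g atTop U := by
  obtain ⟨s, hsU, hs, hUs⟩ :=
    (TopologicalSpace.IsSeparable.of_separableSpace U).exists_countable_dense_subset
  have := hs.to_subtype
  obtain ⟨φ, hφ, hlim⟩ := exists_strictMono_forall_tendsto_of_eventually_mem_isBounded
    (fun j (d : s) => f j d) fun d => by
      obtain ⟨r, hr, M, hM⟩ := hf.exists_ball_norm_le hb (hsU d.2)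
      exact ⟨Metric.closedBall 0 M, Metric.isBounded_closedBall, hM.mono fun j hj =>
        mem_closedBall_zero_iff.mpr (hj.2 d (Metric.mem_ball_self hr))⟩
  have hcauchy : ∀ x ∈ U, UniformCauchySeqOnFilter (fun j => f (φ j)) atTop (𝓝 x) := fun x hx =>
    uniformCauchySeqOnFilter_nhds_of_dense
      ((hf.tendsto_uniformity hb hx).comp (hφ.tendsto_atTop.prodMap tendsto_id)) (hUs hx)
      fun d hd => hlim ⟨d, hd⟩
  obtain ⟨g, hg⟩ := exists_tendstoLocallyUniformlyOn_of_uniformCauchySeqOnFilter hU hcauchy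
  exact ⟨φ, hφ, g, hf.comp_tendsto hφ.tendsto_atTop, hg⟩

end Montel

/-! ### Partial derivatives -/

section PartialDerivatives

variable {n : ℕ}

lemma pderivC_eq_fderiv {f : (Fin n → ℂ) → ℂ} {z : Fin n → ℂ} (i : Fin n)
    (hf : DifferentiableAt ℂ f z) : pderivC i f z = fderiv ℂ f z (Pi.single i 1) := by
  have h : HasFDerivAt f (fderiv ℂ f z) (Function.update z i (z i)) := by
    simpa only [Function.update_eq_self] using hf.hasFDerivAt
  exact (h.comp_hasDerivAt (z i) (hasDerivAt_update z i (z i))).deriv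

section Differentiability

variable {f : (Fin n → ℂ) → ℂ} {U : Set (Fin n → ℂ)}

lemma differentiableOn_pderivC (hU : IsOpen U) (hf : DifferentiableOn ℂ f U) (i : Fin n) :
    DifferentiableOn ℂ (pderivC i f) U :=
  (differentiableOn_fderiv_apply hU hf (Pi.single i 1)).congr fun _ hz =>
    pderivC_eq_fderiv i (hf.differentiableAt (hU.mem_nhds hz))

lemma differentiableOn_iterate_pderivC (hU : IsOpen U) (hf : DifferentiableOn ℂ f U) (i : Fin n)
    (k : ℕ) : DifferentiableOn ℂ ((pderivC i)^[k] f) U := by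
  induction k with
  | zero => exact hf
  | succ k ih => rw [Function.iterate_succ_apply']; exact differentiableOn_pderivC hU ih i

lemma differentiableOn_foldr_iterate_pderivC (hU : IsOpen U) (hf : DifferentiableOn ℂ f U)
    (α : Fin n → ℕ) (L : List (Fin n)) :
    DifferentiableOn ℂ (L.foldr (fun i g => (pderivC i)^[α i] g) f) U := by
  induction L with
  | nil => exact hf
  | cons i L ih => exact differentiableOn_iterate_pderivC hU ih i (α i)

end Differentiability

namespace TendstoHolomorphicallyOn

variable {ι : Type*} {f : ι → (Fin n → ℂ) → ℂ} {g : (Fin n → ℂ) → ℂ} {l : Filter ι}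
  {U : Set (Fin n → ℂ)}

protected lemma pderivC [l.NeBot] (hU : IsOpen U) (h : TendstoHolomorphicallyOn f g l U)
    (i : Fin n) : TendstoHolomorphicallyOn (fun j => pderivC i (f j)) (pderivC i g) l U where
  eventuallyHolomorphicOn x hx := by
    obtain ⟨r, hr, hholo⟩ := h.eventuallyHolomorphicOn.exists_ball hx
    refine eventually_prod_nhds_iff_exists_ball.mpr ⟨r, hr, hholo.mono fun j hj y hy => ?_⟩
    exact (differentiableOn_pderivC Metric.isOpen_ball hj i).differentiableAt
      (Metric.isOpen_ball.mem_nhds hy)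
  tendstoLocallyUniformlyOn := by
    have hfderiv := (ContinuousLinearMap.apply ℂ ℂ
      (Pi.single i 1 : Fin n → ℂ)).uniformContinuous.comp_tendstoLocallyUniformlyOn
        (h.tendstoLocallyUniformlyOn_fderiv hU)
    rw [hU.tendstoLocallyUniformlyOn_iff_forall_tendsto] at hfderiv ⊢
    refine fun x hx => (hfderiv x hx).congr' ?_
    filter_upwards [h.eventuallyHolomorphicOn x hx,
      tendsto_snd.eventually (hU.eventually_mem hx)] with p hpf hpU
    have hpg := (h.differentiableOn hU).differentiableAt (hU.mem_nhds hpU)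
    rw [pderivC_eq_fderiv i hpf, pderivC_eq_fderiv i hpg]
    rfl

lemma iterate_pderivC [l.NeBot] (hU : IsOpen U) (h : TendstoHolomorphicallyOn f g l U)
    (i : Fin n) (k : ℕ) :
    TendstoHolomorphicallyOn (fun j => (_root_.pderivC i)^[k] (f j)) ((_root_.pderivC i)^[k] g)
      l U := by
  induction k with
  | zero => exact h
  | succ k ih => simp only [Function.iterate_succ_apply']; exact ih.pderivC hU i

protected lemma multiDeriv [l.NeBot] (hU : IsOpen U) (h : TendstoHolomorphicallyOn f g l U)
    (α : Fin n → ℕ) :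
    TendstoHolomorphicallyOn (fun j => multiDeriv α (f j)) (multiDeriv α g) l U := by
  unfold multiDeriv
  induction List.finRange n with
  | nil => exact h
  | cons i L ih => exact ih.iterate_pderivC hU i (α i)

end TendstoHolomorphicallyOn

section CauchyEstimates

lemma iterate_pderivC_update (i : Fin n) (f : (Fin n → ℂ) → ℂ) (z : Fin n → ℂ) (k : ℕ) (t : ℂ) :
    (pderivC i)^[k] f (Function.update z i t) =
      iteratedDeriv k (fun s => f (Function.update z i s)) t := by
  induction k generalizing t with
  | zero => rw [Function.iterate_zero_apply, iteratedDeriv_zero]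
  | succ k ih =>
    rw [Function.iterate_succ_apply', iteratedDeriv_succ]
    simp only [pderivC, Function.update_idem, Function.update_self, ih]

lemma dist_update_self {ι : Type*} [Fintype ι] [DecidableEq ι] {X : ι → Type*}
    [∀ i, PseudoMetricSpace (X i)] (x : ∀ i, X i) (i : ι) (t : X i) :
    dist (Function.update x i t) x = dist t (x i) := by
  refine le_antisymm ((dist_pi_le_iff dist_nonneg).mpr fun j => ?_) ?_
  · rcases eq_or_ne j i with rfl | hj
    · rw [Function.update_self]
    · rw [Function.update_of_ne hj, dist_self]
      exact dist_nonneg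
  · simpa only [Function.update_self] using dist_le_pi_dist (Function.update x i t) x i

variable {f : (Fin n → ℂ) → ℂ} {c x : Fin n → ℂ} {R δ M : ℝ}

lemma norm_iterate_pderivC_le (hδ : 0 < δ) (hd : DifferentiableOn ℂ f (Metric.ball c R))
    (hM : ∀ y ∈ Metric.ball c R, ‖f y‖ ≤ M) (i : Fin n) (k : ℕ)
    (hx : x ∈ Metric.ball c (R - δ)) : ‖(pderivC i)^[k] f x‖ ≤ k.factorial * M / δ ^ k := by
  have hmem : ∀ t ∈ Metric.closedBall (x i) δ, Function.update x i t ∈ Metric.ball c R :=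
    fun t ht => Metric.mem_ball.mpr <| by
      linarith [dist_triangle (Function.update x i t) x c, dist_update_self x i t,
        Metric.mem_closedBall.mp ht, Metric.mem_ball.mp hx]
  have hslice : DifferentiableOn ℂ (fun t => f (Function.update x i t))
      (Metric.closedBall (x i) δ) :=
    hd.comp (fun t _ => (hasDerivAt_update x i t).differentiableAt.differentiableWithinAt) hmem
  rw [← Function.update_eq_self i x, iterate_pderivC_update]
  exact Complex.norm_iteratedDeriv_le_of_forall_mem_sphere_norm_le k hδ
    (hslice.diffContOnCl_ball subset_rfl)
    fun t ht => hM _ (hmem t (Metric.sphere_subset_closedBall ht))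

lemma norm_foldr_iterate_pderivC_le (hδ : 0 < δ) (hd : DifferentiableOn ℂ f (Metric.ball c R))
    (hM : ∀ y ∈ Metric.ball c R, ‖f y‖ ≤ M) (α : Fin n → ℕ) (L : List (Fin n))
    (hx : x ∈ Metric.ball c (R - L.length * δ)) :
    ‖L.foldr (fun i g => (pderivC i)^[α i] g) f x‖ ≤
      (L.map fun i => ((α i).factorial : ℝ) / δ ^ α i).prod * M := by
  induction L generalizing x with
  | nil => simpa using hM x (by simpa using hx)
  | cons i L ih =>
    have hdL := (differentiableOn_foldr_iterate_pderivC Metric.isOpen_ball hd α L).mono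
      (Metric.ball_subset_ball (sub_le_self R (by positivity : 0 ≤ L.length * δ)))
    have hxL : x ∈ Metric.ball c (R - L.length * δ - δ) := by
      rwa [List.length_cons, Nat.cast_succ, add_one_mul, ← sub_sub] at hx
    refine (norm_iterate_pderivC_le hδ hdL (fun y hy => ih hy) i (α i) hxL).trans_eq ?_
    rw [List.map_cons, List.prod_cons]
    ring

lemma norm_multiDeriv_le (hδ : 0 < δ) (hd : DifferentiableOn ℂ f (Metric.ball c R))
    (hM : ∀ y ∈ Metric.ball c R, ‖f y‖ ≤ M) (α : Fin n → ℕ)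
    (hx : x ∈ Metric.ball c (R - n * δ)) :
    ‖multiDeriv α f x‖ ≤ mfact α * M / δ ^ mdeg α := by
  refine (norm_foldr_iterate_pderivC_le hδ hd hM α (List.finRange n)
    (by rwa [List.length_finRange])).trans_eq ?_
  rw [← List.ofFn_eq_map, List.prod_ofFn, Finset.prod_div_distrib, Finset.prod_pow_eq_pow_sum,
    mfact, mdeg, Nat.cast_prod]
  ring

end CauchyEstimates

section Homogeneity

lemma pderivC_const_mul (i : Fin n) (a : ℂ) (f : (Fin n → ℂ) → ℂ) :
    pderivC i (fun z => a * f z) = fun z => a * pderivC i f z :=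
  funext fun z => congrFun (deriv_const_mul_field' a) (z i)

lemma multiDeriv_const_mul (α : Fin n → ℕ) (a : ℂ) (f : (Fin n → ℂ) → ℂ) :
    multiDeriv α (fun z => a * f z) = fun z => a * multiDeriv α f z := by
  have hiterate (i : Fin n) (k : ℕ) : Function.Semiconj (fun (h : (Fin n → ℂ) → ℂ) z => a * h z)
      (pderivC i)^[k] (pderivC i)^[k] :=
    .iterate_right (fun h => (pderivC_const_mul i a h).symm) k
  unfold multiDeriv
  induction List.finRange n with
  | nil => rfl
  | cons i L ih => rw [List.foldr_cons, ih, List.foldr_cons]; exact (hiterate i (α i) _).symm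

lemma xiAct_const_mul (ξ : (Fin n → ℕ) → ℂ) (a : ℂ) (f : (Fin n → ℂ) → ℂ) (z : Fin n → ℂ) :
    xiAct ξ (fun z => a * f z) z = a * xiAct ξ f z := by
  simp only [xiAct, multiDeriv_const_mul, ← tsum_mul_left]
  congr 1 with α
  ring

end Homogeneity

end PartialDerivatives

/-! ### Continuity of the `ξ`-action -/

section XiAction

variable {n : ℕ}

lemma mfact_pos (α : Fin n → ℕ) : 0 < mfact α :=
  Finset.prod_pos fun i _ => Nat.factorial_pos (α i)

lemma sum_pow_mdeg_piFinset_range (ρ : ℝ) (N : ℕ) :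
    ∑ α ∈ Fintype.piFinset fun _ : Fin n => Finset.range N, ρ ^ mdeg α =
      (∑ k ∈ Finset.range N, ρ ^ k) ^ n := by
  simp only [mdeg, ← Finset.prod_pow_eq_pow_sum, Finset.sum_prod_piFinset, Finset.prod_const,
    Finset.card_univ, Fintype.card_fin]

lemma summable_pow_mdeg {ρ : ℝ} (hρ₀ : 0 ≤ ρ) (hρ₁ : ρ < 1) :
    Summable fun α : Fin n → ℕ => ρ ^ mdeg α := by
  have hgeom := summable_geometric_of_lt_one hρ₀ hρ₁
  refine summable_of_sum_le (c := (∑' k, ρ ^ k) ^ n) (fun α => pow_nonneg hρ₀ _) fun s => ?_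
  have hbox : s ⊆ Fintype.piFinset fun _ => Finset.range (s.sup mdeg + 1) := fun α hα =>
    Fintype.mem_piFinset.mpr fun i => Finset.mem_range_succ_iff.mpr <|
      (Finset.single_le_sum (fun _ _ => Nat.zero_le _) (Finset.mem_univ i)).trans
        (Finset.le_sup (f := mdeg) hα)
  calc ∑ α ∈ s, ρ ^ mdeg α
      ≤ ∑ α ∈ Fintype.piFinset fun _ : Fin n => Finset.range (s.sup mdeg + 1), ρ ^ mdeg α :=
        Finset.sum_le_sum_of_subset_of_nonneg hbox fun _ _ _ => pow_nonneg hρ₀ _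
    _ = (∑ k ∈ Finset.range (s.sup mdeg + 1), ρ ^ k) ^ n := sum_pow_mdeg_piFinset_range ρ _
    _ ≤ (∑' k, ρ ^ k) ^ n :=
        pow_le_pow_left₀ (Finset.sum_nonneg fun _ _ => pow_nonneg hρ₀ _)
          (hgeom.sum_le_tsum _ fun _ _ => pow_nonneg hρ₀ _) n

lemma norm_xiAct_summand_le {f : (Fin n → ℂ) → ℂ} {c x : Fin n → ℂ} {δ M C : ℝ} (hδ : 0 < δ)
    (hd : DifferentiableOn ℂ f (Metric.ball c ((n + 1) * δ)))
    (hM : ∀ y ∈ Metric.ball c ((n + 1) * δ), ‖f y‖ ≤ M) (hx : x ∈ Metric.ball c δ)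
    {α : Fin n → ℕ} {a : ℂ} (ha : ‖a‖ * (2 / δ) ^ mdeg α ≤ C) :
    ‖a * multiDeriv α f x / mfact α‖ ≤ C * M * (1 / 2) ^ mdeg α := by
  have hcauchy : ‖multiDeriv α f x‖ ≤ mfact α * M / δ ^ mdeg α :=
    norm_multiDeriv_le hδ hd hM α (by rwa [add_one_mul, add_sub_cancel_left])
  have hM₀ : 0 ≤ M :=
    (norm_nonneg _).trans (hM c (Metric.mem_ball_self (by positivity)))
  have hfact : (0 : ℝ) < mfact α := Nat.cast_pos.mpr (mfact_pos α)
  rw [norm_div, norm_mul, Complex.norm_natCast]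
  calc ‖a‖ * ‖multiDeriv α f x‖ / mfact α
      ≤ ‖a‖ * (mfact α * M / δ ^ mdeg α) / mfact α := by gcongr
    _ = ‖a‖ * (2 / δ) ^ mdeg α * M * (1 / 2) ^ mdeg α := by
        rw [div_pow, div_pow, one_pow]
        field_simp
    _ ≤ C * M * (1 / 2) ^ mdeg α := by gcongr

theorem tendsto_xiAct {ι : Type*} {f : ι → (Fin n → ℂ) → ℂ} {g : (Fin n → ℂ) → ℂ} {l : Filter ι}
    [l.NeBot] {U : Set (Fin n → ℂ)} (hU : IsOpen U) (h : TendstoHolomorphicallyOn f g l U)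
    {x : Fin n → ℂ} (hx : x ∈ U) {u : ι → Fin n → ℂ}
    (hu : Tendsto u l (𝓝 x)) {η : ι → (Fin n → ℕ) → ℂ} {η₀ : (Fin n → ℕ) → ℂ}
    (hη : ∀ α, Tendsto (fun j => η j α) l (𝓝 (η₀ α)))
    (hηb : ∀ ρ : ℝ, 0 < ρ → ∃ C, ∀ᶠ j in l, ∀ α, ‖η j α‖ * ρ ^ mdeg α ≤ C) :
    Tendsto (fun j => xiAct (η j) (f j) (u j)) l (𝓝 (xiAct η₀ g x)) := by
  obtain ⟨r, hr, M, hM⟩ := h.eventuallyHolomorphicOn.exists_ball_norm_le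
    (h.eventuallyLocallyBoundedOn hU) hx
  obtain ⟨δ, hδ, rfl⟩ : ∃ δ > 0, (n + 1 : ℝ) * δ = r :=
    ⟨r / (n + 1), by positivity, by field_simp⟩
  obtain ⟨C, hC⟩ := hηb (2 / δ) (by positivity)
  refine tendsto_tsum_of_dominated_convergence (bound := fun α => C * M * (1 / 2) ^ mdeg α)
    ((summable_pow_mdeg one_half_pos.le one_half_lt_one).mul_left _) (fun α => ?_) ?_
  · have hα := h.multiDeriv hU α
    have hlim : Tendsto (fun j => multiDeriv α (f j) (u j)) l (𝓝 (multiDeriv α g x)) :=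
      hα.tendstoLocallyUniformlyOn.tendsto_comp
        ((hα.differentiableOn hU).continuousOn.continuousWithinAt hx) hx
        (by rwa [hU.nhdsWithin_eq hx])
    exact ((hη α).mul hlim).div_const _
  · filter_upwards [hM, hC, hu (Metric.ball_mem_nhds x hδ)] with j hj hCj hju α
    exact norm_xiAct_summand_le hδ hj.1 hj.2 hju (hCj α)

end XiAction

/-! ### The mean value inequality -/

section MeanValue

variable {E F : Type*} [NormedAddCommGroup E] [NormedSpace ℂ E] [NormedAddCommGroup F]
  [NormedSpace ℂ F]

lemma enorm_le_laverage_circle [CompleteSpace F] {f : E → F} {c ζ : E} {r : ℝ}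
    (hd : DifferentiableOn ℂ f (Metric.ball c r)) (hζ : ‖ζ‖ < r) :
    ‖f c‖ₑ ≤ ⨍⁻ θ in Set.Ioc 0 (2 * Real.pi), ‖f (c + Circle.exp θ • ζ)‖ₑ ∂volume := by
  have hmaps : Set.MapsTo (fun t : ℂ => c + t • ζ) (Metric.closedBall 0 1) (Metric.ball c r) :=
    fun t ht => by
      rw [mem_closedBall_zero_iff] at ht
      rw [mem_ball_iff_norm, add_sub_cancel_left, norm_smul]
      exact (mul_le_of_le_one_left (norm_nonneg _) ht).trans_lt hζ
  have hdisc : DiffContOnCl ℂ (fun t : ℂ => f (c + t • ζ)) (Metric.ball 0 |1|) := by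
    rw [abs_one]
    exact (hd.comp (by fun_prop) hmaps).diffContOnCl_ball subset_rfl
  have hmean := hdisc.circleAverage
  rw [Real.circleAverage_eq_intervalAverage, Set.uIoc_of_le Real.two_pi_pos.le] at hmean
  simp only [circleMap_zero, Complex.ofReal_one, one_mul, zero_smul, add_zero] at hmean
  simp only [Circle.smul_def, Circle.coe_exp]
  rw [← hmean]
  exact enorm_integral_le_lintegral_enorm _

variable [MeasurableSpace E] [BorelSpace E] [ProperSpace E] (μ : Measure E) [μ.IsAddHaarMeasure]

lemma measurePreserving_circle_smul (a : Circle) : MeasurePreserving (fun x : E => a • x) μ μ := by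
  have hmeas : Measurable fun x : E => a • x := (continuous_const_smul a).measurable
  have hball : (fun x : E => a • x) ⁻¹' Metric.ball 0 1 = Metric.ball 0 1 := by
    ext x
    simp only [Set.mem_preimage, mem_ball_zero_iff, Circle.norm_smul]
  have : (μ.map fun x => a • x).IsAddHaarMeasure :=
    (ContinuousLinearEquiv.smulLeft a.toUnits : E ≃L[ℂ] E).isAddHaarMeasure_map μ
  have hsmul := Measure.isAddLeftInvariant_eq_smul (μ.map fun x => a • x) μ
  have hfactor : (Measure.addHaarScalarFactor (μ.map fun x => a • x) μ : ℝ≥0∞) = 1 := by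
    refine (ENNReal.mul_eq_right (Metric.measure_ball_pos μ 0 one_pos).ne'
      measure_ball_lt_top.ne).mp ?_
    conv_rhs => rw [← hball, ← Measure.map_apply hmeas measurableSet_ball, hsmul]
    rfl
  refine ⟨hmeas, ?_⟩
  rw [hsmul, ENNReal.coe_eq_one.mp hfactor, one_smul]

lemma lintegral_laverage_circle_smul {G : E → ℝ≥0∞} (hG : Measurable G) :
    ∫⁻ x, ⨍⁻ θ in Set.Ioc 0 (2 * Real.pi), G (Circle.exp θ • x) ∂volume ∂μ = ∫⁻ x, G x ∂μ := by
  have hmeas : Measurable fun p : E × ℝ => G (Circle.exp p.2 • p.1) := by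
    refine hG.comp (Continuous.measurable ?_)
    fun_prop
  simp only [laverage]
  rw [lintegral_lintegral_swap hmeas.aemeasurable]
  simp only [(measurePreserving_circle_smul μ _).lintegral_comp hG]
  exact setLAverage_const (by simp [Real.pi_pos]) measure_Ioc_lt_top.ne _

theorem measure_ball_mul_enorm_le_lintegral [CompleteSpace F] {f : E → F} {c : E} {r : ℝ}
    (hd : DifferentiableOn ℂ f (Metric.ball c r)) :
    μ (Metric.ball 0 r) * ‖f c‖ₑ ≤ ∫⁻ x in Metric.ball c r, ‖f x‖ₑ ∂μ := by
  let G : E → ℝ≥0∞ := (Metric.ball c r).indicator fun x => ‖f x‖ₑ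
  have hG : Measurable G := by
    classical
    simp only [G, ← Set.piecewise_eq_indicator]
    exact hd.continuousOn.enorm.measurable_piecewise continuousOn_const
      Metric.isOpen_ball.measurableSet
  have hmean : ∀ ζ ∈ Metric.ball (0 : E) r,
      ‖f c‖ₑ ≤ ⨍⁻ θ in Set.Ioc 0 (2 * Real.pi), G (c + Circle.exp θ • ζ) ∂volume := fun ζ hζ => by
    rw [mem_ball_zero_iff] at hζ
    refine (enorm_le_laverage_circle hd hζ).trans_eq (lintegral_congr fun θ => Eq.symm ?_)
    refine Set.indicator_of_mem ?_ _
    rwa [mem_ball_iff_norm, add_sub_cancel_left, Circle.norm_smul]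
  calc μ (Metric.ball 0 r) * ‖f c‖ₑ = ∫⁻ _ζ in Metric.ball 0 r, ‖f c‖ₑ ∂μ := by
        rw [setLIntegral_const, mul_comm]
    _ ≤ ∫⁻ ζ in Metric.ball 0 r, ⨍⁻ θ in Set.Ioc 0 (2 * Real.pi), G (c + Circle.exp θ • ζ) ∂volume
          ∂μ := setLIntegral_mono' Metric.isOpen_ball.measurableSet hmean
    _ ≤ ∫⁻ ζ, ⨍⁻ θ in Set.Ioc 0 (2 * Real.pi), G (c + Circle.exp θ • ζ) ∂volume ∂μ :=
        setLIntegral_le_lintegral _ _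
    _ = ∫⁻ x, G (c + x) ∂μ := lintegral_laverage_circle_smul μ (hG.comp (measurable_const_add c))
    _ = ∫⁻ x in Metric.ball c r, ‖f x‖ₑ ∂μ := by
        rw [lintegral_add_left_eq_self G c, lintegral_indicator Metric.isOpen_ball.measurableSet]

end MeanValue

/-! ### Unit balls of weighted Bergman spaces -/

section BergmanSpace

variable {n : ℕ} {D : Set (Fin n → ℂ)} {φ : (Fin n → ℂ) → ℝ} {f : (Fin n → ℂ) → ℂ}

/-- The closed unit ball of the weighted Bergman space `A²(D, e^{-φ})`. -/
def bergmanUnitBall (D : Set (Fin n → ℂ)) (φ : (Fin n → ℂ) → ℝ) : Set ((Fin n → ℂ) → ℂ) :=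
  {f | DifferentiableOn ℂ f D ∧ wL2 D φ f ≤ 1}

lemma wL2_const_mul (D : Set (Fin n → ℂ)) (φ : (Fin n → ℂ) → ℝ) (a : ℂ) (f : (Fin n → ℂ) → ℂ) :
    wL2 D φ (fun z => a * f z) = ENNReal.ofReal (‖a‖ ^ 2) * wL2 D φ f := by
  rw [wL2, wL2, ← lintegral_const_mul' _ _ ENNReal.ofReal_ne_top]
  congr 1 with z
  rw [← ENNReal.ofReal_mul (by positivity), norm_mul, mul_pow, mul_assoc]

lemma norm_ofReal_sqrt_sq (t : ℝ≥0) : ENNReal.ofReal (‖((√t : ℝ) : ℂ)‖ ^ 2) = t := by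
  rw [Complex.norm_real, Real.norm_of_nonneg (Real.sqrt_nonneg _), Real.sq_sqrt t.coe_nonneg,
    ENNReal.ofReal_coe_nnreal]

lemma exists_mem_bergmanUnitBall_mul_eq (hf : DifferentiableOn ℂ f D) {t : ℝ≥0}
    (ht : t * wL2 D φ f ≤ 1) (ξ : (Fin n → ℕ) → ℂ) (z : Fin n → ℂ) :
    ∃ g ∈ bergmanUnitBall D φ,
      ENNReal.ofReal (‖xiAct ξ g z‖ ^ 2) = t * ENNReal.ofReal (‖xiAct ξ f z‖ ^ 2) := by
  refine ⟨fun w => ((√t : ℝ) : ℂ) * f w, ⟨hf.const_mul _, ?_⟩, ?_⟩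
  · rwa [wL2_const_mul, norm_ofReal_sqrt_sq]
  · rw [xiAct_const_mul, norm_mul, mul_pow, ENNReal.ofReal_mul (by positivity),
      norm_ofReal_sqrt_sq]

theorem xiBergman_eq_iSup_bergmanUnitBall (ξ : (Fin n → ℕ) → ℂ) (D : Set (Fin n → ℂ))
    (φ : (Fin n → ℂ) → ℝ) (z : Fin n → ℂ) :
    xiBergman ξ D φ z = ⨆ f ∈ bergmanUnitBall D φ, ENNReal.ofReal (‖xiAct ξ f z‖ ^ 2) := by
  refine le_antisymm (iSup_le fun f => ?_) (iSup₂_le fun f hf => ?_)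
  · rw [div_eq_mul_inv, mul_comm]
    refine ENNReal.mul_le_of_forall_lt fun t ht A hA => ?_
    lift t to ℝ≥0 using ht.ne_top
    obtain ⟨g, hg, hgf⟩ := exists_mem_bergmanUnitBall_mul_eq f.2.1
      (ENNReal.le_inv_iff_mul_le.mp ht.le) ξ z
    calc t * A ≤ t * ENNReal.ofReal (‖xiAct ξ f z‖ ^ 2) := mul_le_mul_right hA.le _
      _ = ENNReal.ofReal (‖xiAct ξ g z‖ ^ 2) := hgf.symm
      _ ≤ ⨆ f ∈ bergmanUnitBall D φ, ENNReal.ofReal (‖xiAct ξ f z‖ ^ 2) :=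
        le_iSup₂_of_le g hg le_rfl
  · have hfA : MemA2 D φ f := ⟨hf.1, hf.2.trans_lt ENNReal.one_lt_top⟩
    refine le_trans ?_ (le_iSup (fun g : {g // MemA2 D φ g} =>
      ENNReal.ofReal (‖xiAct ξ g.1 z‖ ^ 2) / wL2 D φ g.1) ⟨f, hfA⟩)
    simpa only [div_one] using ENNReal.div_le_div_left hf.2 (ENNReal.ofReal (‖xiAct ξ f z‖ ^ 2))

lemma volume_ball_mul_norm_sq_le_wL2 {c : Fin n → ℂ} {r A : ℝ} (hd : DifferentiableOn ℂ f D)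
    (hD : Metric.ball c r ⊆ D) (hφ : ∀ x ∈ Metric.ball c r, φ x ≤ A) :
    volume (Metric.ball (0 : Fin n → ℂ) r) * ENNReal.ofReal (‖f c‖ ^ 2) ≤
      ENNReal.ofReal (Real.exp A) * wL2 D φ f := by
  have hweight : ∀ x ∈ Metric.ball c r, ENNReal.ofReal (‖f x‖ ^ 2) ≤
      ENNReal.ofReal (Real.exp A) * ENNReal.ofReal (‖f x‖ ^ 2 * Real.exp (-φ x)) := fun x hx => by
    rw [← ENNReal.ofReal_mul (Real.exp_pos A).le, mul_left_comm, ← Real.exp_add]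
    exact ENNReal.ofReal_le_ofReal (le_mul_of_one_le_right (sq_nonneg _)
      (Real.one_le_exp (by linarith [hφ x hx])))
  calc volume (Metric.ball (0 : Fin n → ℂ) r) * ENNReal.ofReal (‖f c‖ ^ 2)
      ≤ ∫⁻ x in Metric.ball c r, ENNReal.ofReal (‖f x‖ ^ 2) := by
        simpa only [Pi.pow_apply, enorm_pow, ← ofReal_norm, norm_pow] using
          measure_ball_mul_enorm_le_lintegral volume ((hd.mono hD).pow 2)
    _ ≤ ∫⁻ x in Metric.ball c r,
          ENNReal.ofReal (Real.exp A) * ENNReal.ofReal (‖f x‖ ^ 2 * Real.exp (-φ x)) :=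
        setLIntegral_mono' measurableSet_ball hweight
    _ ≤ ENNReal.ofReal (Real.exp A) * wL2 D φ f := by
        rw [lintegral_const_mul' _ _ ENNReal.ofReal_ne_top]
        exact mul_le_mul_right (lintegral_mono_set hD) _

lemma norm_le_of_mem_bergmanUnitBall {c : Fin n → ℂ} {r A : ℝ} (hr : 0 < r)
    (hf : f ∈ bergmanUnitBall D φ) (hD : Metric.ball c r ⊆ D)
    (hφ : ∀ x ∈ Metric.ball c r, φ x ≤ A) :
    ‖f c‖ ≤ √(ENNReal.ofReal (Real.exp A) / volume (Metric.ball (0 : Fin n → ℂ) r)).toReal := by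
  have hpos := (Metric.measure_ball_pos volume (0 : Fin n → ℂ) hr).ne'
  refine Real.le_sqrt_of_sq_le ((ENNReal.ofReal_le_iff_le_toReal
    (ENNReal.div_ne_top ENNReal.ofReal_ne_top hpos)).mp ?_)
  rw [ENNReal.le_div_iff_mul_le (.inl hpos) (.inl measure_ball_lt_top.ne), mul_comm]
  exact (volume_ball_mul_norm_sq_le_wL2 hf.1 hD hφ).trans (mul_le_of_le_one_right' hf.2)

end BergmanSpace

/-! ### Stability of Bergman kernels -/

section Stability

variable {ι X : Type*} [TopologicalSpace X]

/-- Upper convergence of weighted domains: `(D i, φ i) → (D₀, φ₀)` along `l` if the `D i` exhaust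
`D₀` locally uniformly and the locally uniform upper limit of the weights `φ i` is at most `φ₀`
on `D₀`. -/
def UpperTendsto (D : ι → Set X) (φ : ι → X → ℝ) (l : Filter ι) (D₀ : Set X) (φ₀ : X → ℝ) :
    Prop :=
  ∀ x ∈ D₀, ∀ a, φ₀ x < a → ∀ᶠ p in l ×ˢ 𝓝 x, p.2 ∈ D p.1 ∧ φ p.1 p.2 < a

namespace UpperTendsto

variable {D : ι → Set X} {φ : ι → X → ℝ} {l : Filter ι} {D₀ : Set X} {φ₀ : X → ℝ}

lemma comp_tendsto {κ : Type*} {l' : Filter κ} {k : κ → ι} (h : UpperTendsto D φ l D₀ φ₀)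
    (hk : Tendsto k l' l) : UpperTendsto (fun i => D (k i)) (fun i => φ (k i)) l' D₀ φ₀ :=
  fun x hx a ha => (hk.prodMap tendsto_id).eventually (h x hx a ha)

lemma eventually_mem_and_lt (h : UpperTendsto D φ l D₀ φ₀) {x : X} (hx : x ∈ D₀) {a : ℝ}
    (ha : φ₀ x < a) : ∀ᶠ i in l, x ∈ D i ∧ φ i x < a :=
  (tendsto_id.prodMk tendsto_const_nhds).eventually (h x hx a ha)

lemma eventuallyHolomorphicOn {E F : Type*} [NormedAddCommGroup E] [NormedSpace ℂ E]
    [NormedAddCommGroup F] [NormedSpace ℂ F] {D : ι → Set E} {φ : ι → E → ℝ} {D₀ : Set E}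
    {φ₀ : E → ℝ} (h : UpperTendsto D φ l D₀ φ₀) (hD : ∀ i, IsOpen (D i)) {f : ι → E → F}
    (hf : ∀ i, DifferentiableOn ℂ (f i) (D i)) : EventuallyHolomorphicOn f l D₀ :=
  fun x hx => (h x hx _ (lt_add_one _)).mono fun p hp =>
    (hf p.1).differentiableAt ((hD p.1).mem_nhds hp.1)

lemma eventuallyLocallyBoundedOn {n : ℕ} {D : ι → Set (Fin n → ℂ)} {φ : ι → (Fin n → ℂ) → ℝ}
    {D₀ : Set (Fin n → ℂ)} {φ₀ : (Fin n → ℂ) → ℝ} (h : UpperTendsto D φ l D₀ φ₀)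
    {f : ι → (Fin n → ℂ) → ℂ} (hf : ∀ i, f i ∈ bergmanUnitBall (D i) (φ i)) :
    EventuallyLocallyBoundedOn f l D₀ := fun x hx => by
  obtain ⟨r, hr, hball⟩ := eventually_prod_nhds_iff_exists_ball.mp (h x hx _ (lt_add_one _))
  refine ⟨√(ENNReal.ofReal (Real.exp (φ₀ x + 1)) /
      volume (Metric.ball (0 : Fin n → ℂ) (r / 2))).toReal,
    eventually_prod_nhds_iff_exists_ball.mpr
      ⟨r / 2, half_pos hr, hball.mono fun i hi y hy => ?_⟩⟩
  have hy_ball : Metric.ball y (r / 2) ⊆ Metric.ball x r :=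
    Metric.ball_subset_ball' (by linarith [Metric.mem_ball.mp hy])
  exact norm_le_of_mem_bergmanUnitBall (half_pos hr) (hf i) (fun z hz => (hi z (hy_ball hz)).1)
    fun z hz => (hi z (hy_ball hz)).2.le

end UpperTendsto

lemma ofReal_norm_sq_mul_exp_neg_le_liminf {l : Filter ι} [l.NeBot] {a : ι → ℂ} {a₀ : ℂ}
    {t : ι → ℝ} {t₀ : ℝ} (ha : Tendsto a l (𝓝 a₀)) (ht : ∀ s, t₀ < s → ∀ᶠ i in l, t i < s) :
    ENNReal.ofReal (‖a₀‖ ^ 2 * Real.exp (-t₀)) ≤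
      liminf (fun i => ENNReal.ofReal (‖a i‖ ^ 2 * Real.exp (-t i))) l := by
  have hgt : ∀ s > t₀, ENNReal.ofReal (‖a₀‖ ^ 2 * Real.exp (-s)) ≤
      liminf (fun i => ENNReal.ofReal (‖a i‖ ^ 2 * Real.exp (-t i))) l := fun s hs => by
    have hlim : Tendsto (fun i => ENNReal.ofReal (‖a i‖ ^ 2 * Real.exp (-s))) l
        (𝓝 (ENNReal.ofReal (‖a₀‖ ^ 2 * Real.exp (-s)))) :=
      ENNReal.tendsto_ofReal ((ha.norm.pow 2).mul_const _)
    rw [← hlim.liminf_eq]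
    refine liminf_le_liminf ((ht s hs).mono fun i hi => ?_)
    gcongr
  have hcont : Continuous fun s : ℝ => ENNReal.ofReal (‖a₀‖ ^ 2 * Real.exp (-s)) :=
    ENNReal.continuous_ofReal.comp (by fun_prop)
  exact le_of_tendsto (hcont.continuousWithinAt (s := Set.Ioi t₀))
    (eventually_nhdsWithin_of_forall hgt)

lemma wL2_le_liminf {n : ℕ} {l : Filter ι} [l.NeBot] [l.IsCountablyGenerated]
    {D : ι → Set (Fin n → ℂ)} {φ : ι → (Fin n → ℂ) → ℝ} {f : ι → (Fin n → ℂ) → ℂ}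
    {D₀ : Set (Fin n → ℂ)} {φ₀ : (Fin n → ℂ) → ℝ} {g : (Fin n → ℂ) → ℂ}
    (hD : ∀ i, MeasurableSet (D i)) (hD₀ : MeasurableSet D₀)
    (hφ : ∀ i, AEMeasurable (φ i) (volume.restrict (D i)))
    (hf : ∀ i, AEMeasurable (f i) (volume.restrict (D i)))
    (husc : ∀ z ∈ D₀, ∀ a, φ₀ z < a → ∀ᶠ i in l, z ∈ D i ∧ φ i z < a)
    (hlim : ∀ z ∈ D₀, Tendsto (fun i => f i z) l (𝓝 (g z))) :
    wL2 D₀ φ₀ g ≤ liminf (fun i => wL2 (D i) (φ i) (f i)) l := by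
  have hmeas : ∀ i, AEMeasurable
      ((D i).indicator fun z => ENNReal.ofReal (‖f i z‖ ^ 2 * Real.exp (-φ i z))) := fun i =>
    (aemeasurable_indicator_iff (hD i)).mpr (((hf i).norm.pow_const 2).mul
      (Real.measurable_exp.comp_aemeasurable (hφ i).neg)).ennreal_ofReal
  have hpointwise : ∀ z ∈ D₀, ENNReal.ofReal (‖g z‖ ^ 2 * Real.exp (-φ₀ z)) ≤ liminf (fun i =>
      (D i).indicator (fun z => ENNReal.ofReal (‖f i z‖ ^ 2 * Real.exp (-φ i z))) z) l :=
    fun z hz => by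
      refine (ofReal_norm_sq_mul_exp_neg_le_liminf (hlim z hz) fun a ha =>
        (husc z hz a ha).mono fun _ hi => hi.2).trans (liminf_le_liminf ?_)
      filter_upwards [husc z hz _ (lt_add_one _)] with i hi
      rw [Set.indicator_of_mem hi.1]
  calc wL2 D₀ φ₀ g ≤ ∫⁻ z in D₀, liminf (fun i =>
        (D i).indicator (fun z => ENNReal.ofReal (‖f i z‖ ^ 2 * Real.exp (-φ i z))) z) l :=
        setLIntegral_mono' hD₀ hpointwise
    _ ≤ _ := (setLIntegral_le_lintegral _ _).trans (lintegral_liminf_le' hmeas)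
    _ = liminf (fun i => wL2 (D i) (φ i) (f i)) l := by
        simp only [lintegral_indicator (hD _), wL2]

theorem exists_subseq_tendsto_mem_bergmanUnitBall {n : ℕ} {D : ℕ → Set (Fin n → ℂ)}
    {φ : ℕ → (Fin n → ℂ) → ℝ} {f : ℕ → (Fin n → ℂ) → ℂ} {D₀ : Set (Fin n → ℂ)}
    {φ₀ : (Fin n → ℂ) → ℝ} (hD : ∀ j, IsOpen (D j)) (hD₀ : IsOpen D₀)
    (hφ : ∀ j, AEMeasurable (φ j) (volume.restrict (D j)))
    (h : UpperTendsto D φ atTop D₀ φ₀) (hf : ∀ j, f j ∈ bergmanUnitBall (D j) (φ j)) :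
    ∃ k : ℕ → ℕ, StrictMono k ∧ ∃ g ∈ bergmanUnitBall D₀ φ₀,
      TendstoHolomorphicallyOn (fun j => f (k j)) g atTop D₀ := by
  obtain ⟨k, hk, g, hg⟩ := (h.eventuallyHolomorphicOn hD fun j => (hf j).1).exists_subseq_tendsto
    hD₀ (h.eventuallyLocallyBoundedOn hf)
  have hfatou : wL2 D₀ φ₀ g ≤ liminf (fun j => wL2 (D (k j)) (φ (k j)) (f (k j))) atTop :=
    wL2_le_liminf (fun j => (hD _).measurableSet) hD₀.measurableSet (fun j => hφ _)
      (fun j => (hf _).1.continuousOn.aemeasurable (hD _).measurableSet)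
      (fun z hz a => (h.comp_tendsto hk.tendsto_atTop).eventually_mem_and_lt hz)
      fun z hz => hg.tendsto_apply hz
  refine ⟨k, hk, g, ⟨hg.differentiableOn hD₀, hfatou.trans ?_⟩, hg⟩
  exact (liminf_le_liminf (.of_forall fun j => (hf (k j)).2)).trans_eq (liminf_const 1)

theorem limsup_xiBergman_le {n : ℕ} {l : Filter ι} [l.IsCountablyGenerated]
    {D : ι → Set (Fin n → ℂ)} {φ : ι → (Fin n → ℂ) → ℝ} {D₀ : Set (Fin n → ℂ)}
    {φ₀ : (Fin n → ℂ) → ℝ} (hD : ∀ i, IsOpen (D i)) (hD₀ : IsOpen D₀)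
    (hφ : ∀ i, AEMeasurable (φ i) (volume.restrict (D i))) (h : UpperTendsto D φ l D₀ φ₀)
    {u : ι → Fin n → ℂ} {x : Fin n → ℂ} (hu : Tendsto u l (𝓝 x)) (hx : x ∈ D₀)
    {η : ι → (Fin n → ℕ) → ℂ} {η₀ : (Fin n → ℕ) → ℂ}
    (hη : ∀ α, Tendsto (fun i => η i α) l (𝓝 (η₀ α)))
    (hηb : ∀ ρ : ℝ, 0 < ρ → ∃ C, ∀ᶠ i in l, ∀ α, ‖η i α‖ * ρ ^ mdeg α ≤ C) :
    limsup (fun i => xiBergman (η i) (D i) (φ i) (u i)) l ≤ xiBergman η₀ D₀ φ₀ x := by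
  refine le_of_forall_lt_imp_le_of_dense fun c hc => ?_
  obtain ⟨s, hs, hcs⟩ := exists_seq_forall_of_frequently (frequently_lt_of_lt_limsup (h := hc))
  simp only [xiBergman_eq_iSup_bergmanUnitBall, lt_iSup_iff] at hcs
  choose f hf hcf using hcs
  obtain ⟨k, hk, g, hg, hfg⟩ := exists_subseq_tendsto_mem_bergmanUnitBall (fun j => hD (s j)) hD₀
    (fun j => hφ (s j)) (h.comp_tendsto hs) hf
  have hsk : Tendsto (fun j => s (k j)) atTop l := hs.comp hk.tendsto_atTop
  have hxi : Tendsto (fun j => xiAct (η (s (k j))) (f (k j)) (u (s (k j)))) atTop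
      (𝓝 (xiAct η₀ g x)) :=
    tendsto_xiAct hD₀ hfg hx (hu.comp hsk) (fun α => (hη α).comp hsk) fun ρ hρ =>
      (hηb ρ hρ).imp fun C hC => hsk.eventually hC
  have hc_le : c ≤ ENNReal.ofReal (‖xiAct η₀ g x‖ ^ 2) :=
    ge_of_tendsto' (ENNReal.tendsto_ofReal (hxi.norm.pow 2)) fun j => (hcf (k j)).le
  rw [xiBergman_eq_iSup_bergmanUnitBall]
  exact le_iSup₂_of_le g hg hc_le

end Stability

/-! ### Fibres of a domain -/

section Fibre

variable {n m : ℕ} {Ω : Set ((Fin n → ℂ) × (Fin m → ℂ))} {ψ : (Fin n → ℂ) × (Fin m → ℂ) → ℝ}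

lemma isOpen_fibre {X Y : Type*} [TopologicalSpace X] [TopologicalSpace Y] {Ω : Set (X × Y)}
    (hΩ : IsOpen Ω) (y : Y) : IsOpen {x | (x, y) ∈ Ω} :=
  hΩ.preimage (.prodMk_left y)

lemma upperTendsto_fibre {X Y : Type*} [TopologicalSpace X] [TopologicalSpace Y]
    {Ω : Set (X × Y)} {ψ : X × Y → ℝ} (hΩ : IsOpen Ω) (hψ : UpperSemicontinuousOn ψ Ω) (y : Y) :
    UpperTendsto (fun y => {x | (x, y) ∈ Ω}) (fun y x => ψ (x, y)) (𝓝 y) {x | (x, y) ∈ Ω}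
      (fun x => ψ (x, y)) := fun x hx a ha => by
  have hlt := hψ (x, y) hx a ha
  rw [hΩ.nhdsWithin_eq hx] at hlt
  have hev := (hΩ.eventually_mem hx).and hlt
  rw [nhds_prod_eq] at hev
  exact eventually_swap_iff.mp hev

lemma aemeasurable_fibre (hΩ : IsOpen Ω) (hψ : UpperSemicontinuousOn ψ Ω) (w : Fin m → ℂ) :
    AEMeasurable (fun z => ψ (z, w)) (volume.restrict {z | (z, w) ∈ Ω}) := by
  have husc : UpperSemicontinuousOn (fun z => ψ (z, w)) {z | (z, w) ∈ Ω} :=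
    hψ.comp (by fun_prop) fun z hz => hz
  exact aemeasurable_restrict_of_measurable_subtype (isOpen_fibre hΩ w).measurableSet
    (upperSemicontinuousOn_iff_restrict.mpr husc).measurable

lemma LocUnifBdd.exists_eventually_le {ξ : (Fin m → ℂ) → (Fin n → ℕ) → ℂ} {D : Set (Fin m → ℂ)}
    (h : LocUnifBdd ξ D) {w : Fin m → ℂ} (hw : w ∈ D) {ρ : ℝ} (hρ : 0 < ρ) :
    ∃ C : ℝ, ∀ᶠ w' in 𝓝[D] w, ∀ α, ‖ξ w' α‖ * ρ ^ mdeg α ≤ C := by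
  obtain ⟨V, hV, C, hC⟩ := h w hw ρ hρ
  refine ⟨max C 0, ?_⟩
  filter_upwards [inter_mem_nhdsWithin D hV] with w' hw' α
  have hterm := (ENNReal.le_tsum α).trans (hC w' hw'.symm)
  exact (ENNReal.ofReal_le_ofReal_iff (le_max_right C 0)).mp
    (hterm.trans (ENNReal.ofReal_le_ofReal (le_max_left C 0)))

lemma upperSemicontinuousOn_of_strictMono_comp {X α β : Type*} [TopologicalSpace X] [LinearOrder α]
    [Preorder β] {g : α → β} {f : X → α} {s : Set X} (hg : StrictMono g)
    (h : UpperSemicontinuousOn (fun x => g (f x)) s) : UpperSemicontinuousOn f s :=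
  fun x hx a ha => (h x hx (g a) (hg ha)).mono fun _ => hg.lt_iff_lt.mp

theorem statement17_general (hΩ : IsOpen Ω) (hψ : UpperSemicontinuousOn ψ Ω)
    {ξ : (Fin m → ℂ) → (Fin n → ℕ) → ℂ}
    (hξ : ∀ α, ContinuousOn (fun w => ξ w α) (Prod.snd '' Ω))
    (hξb : LocUnifBdd ξ (Prod.snd '' Ω)) :
    UpperSemicontinuousOn (fun p => fiberKernel ξ Ω ψ p) Ω := by
  intro p hp y hy
  have hz : Tendsto Prod.fst (𝓝[Ω] p) (𝓝 p.1) := continuous_fst.continuousWithinAt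
  have hw : Tendsto Prod.snd (𝓝[Ω] p) (𝓝[Prod.snd '' Ω] p.2) :=
    continuous_snd.continuousWithinAt.tendsto_nhdsWithin_image
  have hpΩ : p.2 ∈ Prod.snd '' Ω := ⟨p, hp, rfl⟩
  have hfibre := (upperTendsto_fibre hΩ hψ p.2).comp_tendsto (hw.mono_right nhdsWithin_le_nhds)
  have hξw : ∀ α, Tendsto (fun q => ξ q.2 α) (𝓝[Ω] p) (𝓝 (ξ p.2 α)) := fun α =>
    (hξ α p.2 hpΩ).tendsto.comp hw
  have hbound : ∀ ρ : ℝ, 0 < ρ → ∃ C, ∀ᶠ q in 𝓝[Ω] p, ∀ α, ‖ξ q.2 α‖ * ρ ^ mdeg α ≤ C :=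
    fun ρ hρ => (hξb.exists_eventually_le hpΩ hρ).imp fun C hC => hw.eventually hC
  have hlimsup := limsup_xiBergman_le (fun q => isOpen_fibre hΩ q.2) (isOpen_fibre hΩ p.2)
    (fun q => aemeasurable_fibre hΩ hψ q.2) hfibre hz hp hξw hbound
  exact eventually_lt_of_limsup_lt (hlimsup.trans_lt hy)

end Fibre

/-- Upper semicontinuity of the fiberwise `ξ(w)`-Bergman kernels `K^{ψ_w}_{ξ(w),Ω_w}(z)`
on a pseudoconvex domain `Ω ⊆ ℂ^{n+m}`, for a holomorphic, locally uniformly bounded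
functional-valued function `ξ(·)` and a plurisubharmonic weight `ψ`. -/
theorem statement17 {n m : ℕ} (Ω : Set ((Fin n → ℂ) × (Fin m → ℂ)))
    (hΩ : Pseudoconvex Ω)
    (ψ : (Fin n → ℂ) × (Fin m → ℂ) → ℝ)
    (hψ : PlurisubharmonicOn (fun p => (ψ p : EReal)) Ω)
    (ξ : (Fin m → ℂ) → (Fin n → ℕ) → ℂ)
    (hmem : ∀ w ∈ Prod.snd '' Ω, MemL1 (ξ w))
    (hhol : ∀ α : Fin n → ℕ, DifferentiableOn ℂ (fun w => ξ w α) (Prod.snd '' Ω))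
    (hlub : LocUnifBdd ξ (Prod.snd '' Ω)) :
    UpperSemicontinuousOn (fun p => fiberKernel ξ Ω ψ p) Ω :=
  statement17_general hΩ.1 (upperSemicontinuousOn_of_strictMono_comp EReal.coe_strictMono hψ.1)
    (fun α => (hhol α).continuousOn) hlub
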